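/- Suppose 1/3 < α ≤ 1 and let k ≥ 1 and M ≥ 1 be integers. Let X ⊆ V and let I be an independent set contained in the common neighborhood ∩_{x∈X} N(x) with |I| ≥ (k+1)·M, such that every vertex u ∈ V∖X satisfies |N(u) ∩ I| ≤ M. Let v ∈ I be a vertex such that degc(w) ≥ degc(v) for every w ∈ I. Then for every set S ⊆ V with |S| = k and v ∈ S, there exists a vertex v' ∈ I∖S with v' ≠ v such that val((S∖{v}) ∪ {v'}) ≥ val(S). -/

import Mathlib

open Finset

variable {V : Type*} [Fintype V] [DecidableEq V]

/-- Number of edges of `G` with both endpoints in `S`. -/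
def mIn (G : SimpleGraph V) [DecidableRel G.Adj] (S : Finset V) : ℕ :=
  (G.edgeFinset.filter (fun e => ∀ v ∈ e, v ∈ S)).card

/-- Number of edges of `G` with exactly one endpoint in `S`. -/
def mCut (G : SimpleGraph V) [DecidableRel G.Adj] (S : Finset V) : ℕ :=
  (G.edgeFinset.filter (fun e => (∃ v ∈ e, v ∈ S) ∧ ∃ v ∈ e, v ∉ S)).card

/-- `val(S) = α·(m(S, V∖S) + counter(S)) + (1−α)·m(S)`. -/
noncomputable def val (G : SimpleGraph V) [DecidableRel G.Adj] (counter : V → ℕ) (α : ℝ)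
    (S : Finset V) : ℝ :=
  α * ((mCut G S : ℝ) + ∑ v ∈ S, (counter v : ℝ)) + (1 - α) * (mIn G S : ℝ)

/-- `degc(v) = deg(v) + counter(v)`. -/
def degc (G : SimpleGraph V) [DecidableRel G.Adj] (counter : V → ℕ) (v : V) : ℕ :=
  G.degree v + counter v

/-- `contribution(v, T) = α·degc(v) + (1−3α)·|N(v) ∩ T|`. -/
noncomputable def contribution (G : SimpleGraph V) [DecidableRel G.Adj] (counter : V → ℕ)
    (α : ℝ) (v : V) (T : Finset V) : ℝ :=
  α * (degc G counter v : ℝ) + (1 - 3 * α) * ((G.neighborFinset v ∩ T).card : ℝ)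

/-- `I` is an independent set of `G`: pairwise non-adjacent vertices. -/
def IndepOn (G : SimpleGraph V) (I : Finset V) : Prop :=
  ∀ u ∈ I, ∀ w ∈ I, u ≠ w → ¬ G.Adj u w

/-- `G` is `c`-closed: every pair of distinct non-adjacent vertices has at most
`c − 1` common neighbors. -/
def CClosed (G : SimpleGraph V) [DecidableRel G.Adj] (c : ℕ) : Prop :=
  ∀ u v : V, u ≠ v → ¬ G.Adj u v → (G.neighborFinset u ∩ G.neighborFinset v).card ≤ c - 1

lemma card_star (G : SimpleGraph V) (w : V) (T : Finset V) :
    (T.image (fun u => s(w, u))).card = T.card := by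
  apply Finset.card_image_of_injective
  intro a b h
  simp at h
  grind

lemma mIn_insert (G : SimpleGraph V) [DecidableRel G.Adj] (w : V) (T : Finset V) (hw : w ∉ T) :
    mIn G (insert w T) = mIn G T + (G.neighborFinset w ∩ T).card := by
  unfold mIn
  rw [← card_star G w (G.neighborFinset w ∩ T), ← Finset.card_union_of_disjoint]
  · congr 1
    ext e
    induction e using Sym2.ind with
    | _ a b =>
      have h1 := G.ne_of_adj (a := a) (b := b)
      have h2 := G.adj_comm a b
      simp only [mem_filter, SimpleGraph.mem_edgeFinset, SimpleGraph.mem_edgeSet, Sym2.mem_iff,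
        mem_union, mem_image, mem_inter, SimpleGraph.mem_neighborFinset, Sym2.eq_iff, mem_insert,
        forall_eq_or_imp, forall_eq]
      grind
  · rw [Finset.disjoint_left]
    intro e he he2
    simp only [mem_image, mem_filter] at he he2
    obtain ⟨u, hu, rfl⟩ := he2
    exact hw (he.2 w (by simp))

lemma mCut_insert (G : SimpleGraph V) [DecidableRel G.Adj] (w : V) (T : Finset V) (hw : w ∉ T) :
    mCut G (insert w T) + 2 * (G.neighborFinset w ∩ T).card = mCut G T + G.degree w := by
  have hd : (G.neighborFinset w \ T).card + (G.neighborFinset w ∩ T).card = G.degree w := by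
    rw [Finset.card_sdiff_add_card_inter, SimpleGraph.card_neighborFinset_eq_degree]
  let A := (G.edgeFinset.filter (fun e => (∃ v ∈ e, v ∈ T) ∧ ∃ v ∈ e, v ∉ T)).filter (fun e => w ∉ e)
  have hA : ∀ U : Finset V, (A ∪ U.image (fun u => s(w, u))).card = A.card + U.card := by
    intro U
    rw [Finset.card_union_of_disjoint, card_star G]
    rw [Finset.disjoint_left]
    intro e he he2
    simp only [mem_image, mem_filter, A] at he he2
    obtain ⟨u, hu, rfl⟩ := he2
    exact he.2 (by simp)
  have e1 : mCut G T = A.card + (G.neighborFinset w ∩ T).card := by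
    rw [← hA]
    unfold mCut
    congr 1
    ext e
    induction e using Sym2.ind with
    | _ a b =>
      have h1 := G.ne_of_adj (a := a) (b := b)
      have h2 := G.adj_comm a b
      simp only [mem_filter, SimpleGraph.mem_edgeFinset, SimpleGraph.mem_edgeSet, Sym2.mem_iff,
        mem_union, mem_image, mem_inter, SimpleGraph.mem_neighborFinset, Sym2.eq_iff, A,
        exists_eq_or_imp, exists_eq_left]
      grind
  have e2 : mCut G (insert w T) = A.card + (G.neighborFinset w \ T).card := by
    rw [← hA]
    unfold mCut
    congr 1
    ext e
    induction e using Sym2.ind with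
    | _ a b =>
      have h1 := G.ne_of_adj (a := a) (b := b)
      have h2 := G.adj_comm a b
      simp only [mem_filter, SimpleGraph.mem_edgeFinset, SimpleGraph.mem_edgeSet, Sym2.mem_iff,
        mem_union, mem_image, mem_sdiff, SimpleGraph.mem_neighborFinset, Sym2.eq_iff, A,
        exists_eq_or_imp, exists_eq_left, mem_insert]
      grind
  omega

lemma val_insert (G : SimpleGraph V) [DecidableRel G.Adj] (counter : V → ℕ) (α : ℝ)
    (w : V) (T : Finset V) (hw : w ∉ T) :
    val G counter α (insert w T) = val G counter α T + contribution G counter α w T := by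
  have h1 : (mIn G (insert w T) : ℝ) = mIn G T + (G.neighborFinset w ∩ T).card := by
    exact_mod_cast mIn_insert G w T hw
  have h2 : (mCut G (insert w T) : ℝ) + 2 * (G.neighborFinset w ∩ T).card
      = mCut G T + G.degree w := by
    exact_mod_cast mCut_insert G w T hw
  have h3 : (mCut G (insert w T) : ℝ) = mCut G T + G.degree w
      - 2 * (G.neighborFinset w ∩ T).card := by linarith
  unfold _root_.val contribution degc
  rw [h1, h3, Finset.sum_insert hw]
  push_cast
  ring

/-- Exchange within a large independent set `I` in the common neighborhood of `X`
(for `1/3 < α ≤ 1`): the worst vertex `v` of `I` can be replaced in any `k`-set `S`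
containing it by some other vertex of `I` without decreasing `val`. -/
theorem indep_set_exchange (G : SimpleGraph V) [DecidableRel G.Adj]
    (counter : V → ℕ) (α : ℝ) (hα1 : 1 / 3 < α) (hα2 : α ≤ 1)
    (k M : ℕ) (hk : 1 ≤ k) (hM : 1 ≤ M)
    (X I : Finset V) (hIind : IndepOn G I)
    (hIsub : ∀ x ∈ X, I ⊆ G.neighborFinset x)
    (hIcard : (k + 1) * M ≤ I.card)
    (hfew : ∀ u : V, u ∉ X → (G.neighborFinset u ∩ I).card ≤ M)
    (v : V) (hvI : v ∈ I) (hvmin : ∀ w ∈ I, degc G counter v ≤ degc G counter w) :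
    ∀ S : Finset V, S.card = k → v ∈ S →
      ∃ v' ∈ I, v' ∉ S ∧ v' ≠ v ∧
        val G counter α (insert v' (S.erase v)) ≥ val G counter α S := by
  intro S hS hvS
  let T := S.erase v
  have hT : T.card + 1 = k := by rw [← hS]; exact Finset.card_erase_add_one hvS
  have hvT : v ∉ T := Finset.notMem_erase v S
  let f : V → Finset V := fun u =>
    if u ∈ I then {u} else if u ∈ X then ∅ else G.neighborFinset u ∩ I
  have hf : ∀ u ∈ T, (f u).card ≤ M := by
    intro u _
    simp only [f]
    split_ifs with h1 h2
    · simpa using hM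
    · simp
    · exact hfew u h2
  have hbad : (insert v (T.biUnion f)).card < I.card := by
    have h1 := Finset.card_insert_le v (T.biUnion f)
    have h2 := Finset.card_biUnion_le_card_mul T f M hf
    have h3 : (k + 1) * M = T.card * M + 2 * M := by rw [← hT]; ring
    omega
  obtain ⟨w, hwI, hw⟩ := Finset.exists_mem_notMem_of_card_lt_card hbad
  simp only [mem_insert, mem_biUnion, not_or, not_exists, not_and] at hw
  obtain ⟨hwv, hw⟩ := hw
  have hwT : w ∉ T := fun h => hw w h (by simp [f, hwI])
  have hwS : w ∉ S := fun h => hwT (Finset.mem_erase.2 ⟨hwv, h⟩)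
  refine ⟨w, hwI, hwS, hwv, ?_⟩
  have hsub : G.neighborFinset w ∩ T ⊆ G.neighborFinset v ∩ T := by
    intro u hu
    simp only [mem_inter, SimpleGraph.mem_neighborFinset] at hu ⊢
    refine ⟨?_, hu.2⟩
    have huI : u ∉ I := fun h => hIind w hwI u h hu.1.ne hu.1
    by_cases huX : u ∈ X
    · have := hIsub u huX hvI
      rw [SimpleGraph.mem_neighborFinset] at this
      exact this.symm
    · exact absurd (by simp [f, huI, huX, hwI, hu.1.symm]) (hw u hu.2)
  have hc : ((G.neighborFinset w ∩ T).card : ℝ) ≤ (G.neighborFinset v ∩ T).card := by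
    exact_mod_cast Finset.card_le_card hsub
  have hdg : (degc G counter v : ℝ) ≤ degc G counter w := by exact_mod_cast hvmin w hwI
  have hSv : val G counter α S = val G counter α T + contribution G counter α v T := by
    rw [← val_insert G counter α v T hvT, Finset.insert_erase hvS]
  rw [hSv, val_insert G counter α w T hwT]
  unfold contribution
  have a1 : α * (degc G counter v : ℝ) ≤ α * degc G counter w :=
    mul_le_mul_of_nonneg_left hdg (by linarith)
  have a2 := mul_le_mul_of_nonneg_left hc (show 0 ≤ 3 * α - 1 by linarith)
  linarith
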